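/- The infinite series identity 5√2 = Σ_{k=0}^{∞} (-1/4)^k · [(-1/8)_k (1/4)_k (3/8)_k] / [(1)_k (9/8)_k (13/8)_k] · (40k + 7) holds, where the sum is over natural numbers k and all quantities are real numbers. -/

import Mathlib

noncomputable def risingFactorial (a : ℝ) (k : ℕ) : ℝ := ∏ i ∈ Finset.range k, (a + i)
open MeasureTheory Set Filter Topology ProbabilityTheory

lemma rf_succ (a : ℝ) (k : ℕ) : risingFactorial a (k+1) = risingFactorial a k * (a + k) := by
  simp [risingFactorial, Finset.prod_range_succ]

lemma rf_pos {a : ℝ} (ha : 0 < a) (k : ℕ) : 0 < risingFactorial a k :=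
  Finset.prod_pos fun i _ => by positivity

lemma beta_int {a b : ℝ} (ha : 0 < a) (hb : 0 < b) :
    ∫ x in Ioo (0:ℝ) 1, x ^ (a - 1) * (1 - x) ^ (b - 1) = beta a b := by
  rw [beta_eq_betaIntegralReal a b ha hb, Complex.betaIntegral, intervalIntegral.integral_of_le zero_le_one,
    ← integral_Ioc_eq_integral_Ioo, ← RCLike.re_eq_complex_re, ← integral_re]
  · refine setIntegral_congr_fun measurableSet_Ioc fun x ⟨hx1, hx2⟩ ↦ ?_
    norm_cast
    rw [← Complex.ofReal_cpow, ← Complex.ofReal_cpow, RCLike.re_eq_complex_re, Complex.re_mul_ofReal,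
      Complex.ofReal_re]
    all_goals linarith
  · rw [← IntegrableOn, ← intervalIntegrable_iff_integrableOn_Ioc_of_le zero_le_one]
    exact Complex.betaIntegral_convergent (by simpa) (by simpa)

lemma beta_integrable {a b : ℝ} (ha : 0 < a) (hb : 0 < b) :
    IntegrableOn (fun x : ℝ => x ^ (a - 1) * (1 - x) ^ (b - 1)) (Ioo 0 1) := by
  by_contra h
  have := beta_int ha hb
  rw [integral_undef h] at this
  linarith [beta_pos ha hb]

lemma rf_choose (k : ℕ) : Ring.choose (-1/4 : ℝ) k = (-1)^k * risingFactorial (1/4) k / risingFactorial 1 k := by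
  have h := Ring.descPochhammer_eq_factorial_smul_choose (-1/4 : ℝ) k
  have h1 : (descPochhammer ℤ k).smeval (-1/4 : ℝ) = (-1)^k * risingFactorial (1/4) k := by
    clear h
    induction k with
    | zero => simp [risingFactorial]
    | succ n ih =>
      rw [rf_succ, descPochhammer_succ_right, Polynomial.smeval_mul, ih]
      simp [Polynomial.smeval_natCast]
      ring
  have h2 : (k.factorial : ℝ) = risingFactorial 1 k := by
    clear h h1
    induction k with
    | zero => simp [risingFactorial]
    | succ n ih => rw [rf_succ, ← ih, Nat.factorial_succ]; push_cast; ring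
  rw [h1, nsmul_eq_mul, h2] at h
  rw [h]; field_simp [(rf_pos one_pos k).ne']

noncomputable def ak (k : ℕ) : ℝ := (-1/4)^k * risingFactorial (1/4) k / risingFactorial 1 k

lemma ak_abs (k : ℕ) : |ak k| ≤ (1/4)^k := by
  have h0 := rf_pos one_pos k
  have h1 := rf_pos (show (0:ℝ) < 1/4 by norm_num) k
  have : risingFactorial (1/4) k ≤ risingFactorial 1 k := by
    refine Finset.prod_le_prod (fun i _ => by positivity) fun i _ => by linarith
  rw [ak, abs_div, abs_mul, abs_pow, abs_of_pos h0, abs_of_pos h1, div_le_iff₀ h0]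
  norm_num
  gcongr

lemma ak_sum {x : ℝ} (h0 : 0 < x) (h1 : x < 1) :
    HasSum (fun k => ak k * x^(2*k)) ((1 + x^2/4)^(-1/4 : ℝ)) := by
  have h := (Real.one_add_rpow_hasFPowerSeriesOnBall_zero (a := -1/4)).hasSum (y := x^2/4) (by
    rw [← ENNReal.ofReal_one, Metric.eball_ofReal]
    simp only [Metric.mem_ball, dist_zero_right, Real.norm_eq_abs]
    rw [abs_of_pos (by positivity)]; nlinarith)
  simp only [zero_add] at h
  convert! h using 2 with k
  simp [binomialSeries, rf_choose, ak]
  rw [pow_mul, div_pow]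
  try rw [div_pow]
  ring

noncomputable def w0 (x : ℝ) : ℝ := x ^ (-5/4 : ℝ) * (1 - x) ^ (1/2 : ℝ) * (12 + 18 * x)
noncomputable def om (x : ℝ) : ℝ := w0 x * (1 + x^2/4) ^ (-1/4 : ℝ)

lemma term_int (k : ℕ) : ∫ x in Ioo (0:ℝ) 1, ak (k+1) * x^(2*(k+1)) * w0 x =
    ak (k+1) * ((40 * ((k+1 : ℕ) : ℝ) + 7) * beta (2 * ((k+1 : ℕ) : ℝ) - 1/4) (5/2)) := by
  set s : ℝ := 2 * ((k+1 : ℕ) : ℝ) - 1/4 with hs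
  have hk : (0:ℝ) ≤ k := Nat.cast_nonneg k
  have hs0 : 0 < s := by rw [hs]; push_cast; linarith
  have e : ∀ x ∈ Ioo (0:ℝ) 1, ak (k+1) * x^(2*(k+1)) * w0 x =
      ak (k+1) * (12 * (x^(s-1) * (1-x)^((3/2:ℝ)-1)) + 18 * (x^((s+1)-1) * (1-x)^((3/2:ℝ)-1))) := by
    intro x hx
    have h1 : x^(s-1) = x^(2*(k+1)) * x^(-5/4:ℝ) := by
      rw [← Real.rpow_natCast, ← Real.rpow_add hx.1]; congr 1; rw [hs]; push_cast; ring
    have h2 : x^((s+1)-1) = x^(2*(k+1)) * x^(-5/4:ℝ) * x := by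
      rw [← h1]; nth_rw 3 [← Real.rpow_one x]; rw [← Real.rpow_add hx.1]; congr 1; ring
    rw [h1, h2, w0, show (3/2:ℝ)-1 = 1/2 by norm_num]; ring
  rw [setIntegral_congr_fun measurableSet_Ioo e, integral_const_mul, integral_add, integral_const_mul,
    integral_const_mul, beta_int hs0 (by norm_num), beta_int (by linarith) (by norm_num)]
  · congr 1
    unfold beta
    have g1 : Real.Gamma (s+1) = s * Real.Gamma s := Real.Gamma_add_one hs0.ne'
    have g2 : Real.Gamma (s+1+3/2) = (s+3/2) * Real.Gamma (s+3/2) := by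
      rw [← Real.Gamma_add_one (by positivity)]; congr 1; ring
    have g3 : Real.Gamma (s+5/2) = (s+3/2) * Real.Gamma (s+3/2) := by
      rw [← Real.Gamma_add_one (by positivity)]; congr 1; ring
    have g4 : Real.Gamma (5/2) = 3/2 * Real.Gamma (3/2) := by
      rw [← Real.Gamma_add_one (by positivity)]; congr 1; norm_num
    have g5 : Real.Gamma (s+3/2) ≠ 0 := (Real.Gamma_pos_of_pos (by positivity)).ne'
    have g6 : s + 3/2 ≠ 0 := by positivity
    have g7 : 40 * ((k+1 : ℕ) : ℝ) + 7 = 20 * s + 12 := by rw [hs]; ring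
    rw [g1, g2, g3, g4, g7]
    field_simp
    ring
  · exact (beta_integrable hs0 (by norm_num)).const_mul _
  · exact (beta_integrable (by linarith) (by norm_num)).const_mul _

lemma term_bd (k : ℕ) {x : ℝ} (hx : x ∈ Ioo (0:ℝ) 1) :
    ‖ak (k+1) * x^(2*(k+1)) * w0 x‖ ≤ (1/4)^(k+1) * 30 := by
  have h1 : x^(2*(k+1)) * x^(-5/4:ℝ) ≤ 1 := by
    rw [← Real.rpow_natCast, ← Real.rpow_add hx.1]
    apply Real.rpow_le_one hx.1.le hx.2.le
    push_cast
    linarith [(Nat.cast_nonneg k : (0:ℝ) ≤ k)]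
  have h2 : (1 - x) ^ (1/2 : ℝ) ≤ 1 := Real.rpow_le_one (by linarith [hx.2]) (by linarith [hx.1]) (by norm_num)
  have p1 : 0 ≤ x^(2*(k+1)) * x^(-5/4:ℝ) := mul_nonneg (pow_nonneg hx.1.le _) (Real.rpow_nonneg hx.1.le _)
  have p2 : 0 ≤ (1 - x) ^ (1/2 : ℝ) := Real.rpow_nonneg (by linarith [hx.2]) _
  have h3 : 12 + 18 * x ≤ 30 := by linarith [hx.2]
  have p3 : 0 ≤ 12 + 18 * x := by linarith [hx.1]
  have e : ak (k+1) * x^(2*(k+1)) * w0 x = ak (k+1) * ((x^(2*(k+1)) * x^(-5/4:ℝ)) * (1 - x) ^ (1/2 : ℝ) * (12 + 18 * x)) := by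
    rw [w0]; ring
  have p4 : 0 ≤ (x^(2*(k+1)) * x^(-5/4:ℝ)) * (1 - x) ^ (1/2 : ℝ) * (12 + 18 * x) :=
    mul_nonneg (mul_nonneg p1 p2) p3
  rw [e, norm_mul, Real.norm_eq_abs, Real.norm_eq_abs, abs_of_nonneg p4]
  refine mul_le_mul (ak_abs _) ?_ p4 (by positivity)
  calc _ ≤ (1:ℝ) * 1 * 30 := by gcongr
    _ = 30 := by norm_num

lemma w0_meas : Measurable w0 := by unfold w0; fun_prop
lemma om_meas : Measurable om := by unfold om; have := w0_meas; fun_prop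

lemma term_hasSum {x : ℝ} (hx : x ∈ Ioo (0:ℝ) 1) :
    HasSum (fun k => ak (k+1) * x^(2*(k+1)) * w0 x) (om x - w0 x) := by
  have h := (ak_sum hx.1 hx.2).mul_right (w0 x)
  rw [← hasSum_nat_add_iff' 1] at h
  convert! h using 1
  simp [ak, risingFactorial, om]
  ring

lemma bd_sum : HasSum (fun k : ℕ => ((1:ℝ)/4)^(k+1) * 30) 10 := by
  have h := (hasSum_geometric_of_lt_one (r := (1:ℝ)/4) (by norm_num) (by norm_num)).mul_left ((1:ℝ)/4*30)
  convert! h using 1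
  · ext k; ring
  · norm_num

lemma series_int : HasSum (fun k => ∫ x in Ioo (0:ℝ) 1, ak (k+1) * x^(2*(k+1)) * w0 x)
    (∫ x in Ioo (0:ℝ) 1, (om x - w0 x)) := by
  refine hasSum_integral_of_dominated_convergence (fun k _ => (1/4)^(k+1) * 30) ?_ ?_ ?_ ?_ ?_
  · intro k; have := w0_meas
    exact Measurable.aestronglyMeasurable (by fun_prop)
  · exact fun k => ae_restrict_of_forall_mem measurableSet_Ioo fun x hx => term_bd k hx
  · exact ae_of_all _ fun x => bd_sum.summable
  · exact integrable_const _
  · exact ae_restrict_of_forall_mem measurableSet_Ioo fun x hx => term_hasSum hx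

lemma diff_integrable : IntegrableOn (fun x => om x - w0 x) (Ioo 0 1) := by
  refine Integrable.mono' (g := fun _ => (10:ℝ)) (integrable_const _)
    (om_meas.sub w0_meas).aestronglyMeasurable ?_
  refine ae_restrict_of_forall_mem measurableSet_Ioo fun x hx => ?_
  rw [← (term_hasSum hx).tsum_eq]
  exact tsum_of_norm_bounded bd_sum fun k => term_bd k hx

noncomputable def uu (x : ℝ) : ℝ := 4 * x / (x^2 - x + 2)^2
noncomputable def du (x : ℝ) : ℝ := 4 * (1 - x) * (2 + 3 * x) / (x^2 - x + 2)^3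

lemma Q_pos (x : ℝ) : 0 < x^2 - x + 2 := by nlinarith [sq_nonneg (x - 1/2)]

lemma uu_deriv (x : ℝ) : HasDerivAt uu (du x) x := by
  have hq := (Q_pos x).ne'
  have h1 : HasDerivAt (fun x : ℝ => 4 * x) 4 x := by simpa using (hasDerivAt_id x).const_mul 4
  have h2 : HasDerivAt (fun x : ℝ => x^2 - x + 2) (2 * x - 1) x := by
    simpa using ((hasDerivAt_pow 2 x).sub (hasDerivAt_id x)).add_const 2
  have h := h1.div (h2.pow 2) (by simp [hq])
  convert! h using 1
  simp only [du, Pi.pow_apply]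
  push_cast
  field_simp
  ring

lemma one_sub_uu (x : ℝ) : 1 - uu x = (1-x)^2 * (4 + x^2) / (x^2 - x + 2)^2 := by
  have hq := (Q_pos x).ne'
  rw [uu]
  generalize hQ : x^2 - x + 2 = Q at hq ⊢
  field_simp
  rw [← hQ]; ring

lemma uu_mem {x : ℝ} (hx : x ∈ Ioo (0:ℝ) 1) : uu x ∈ Ioo (0:ℝ) 1 := by
  have hq := (Q_pos x)
  have h1 : 0 < 1 - x := by linarith [hx.2]
  have h0 := hx.1
  constructor
  · rw [uu]; positivity
  · have : 0 < 1 - uu x := by rw [one_sub_uu]; positivity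
    linarith

lemma du_pos {x : ℝ} (hx : x ∈ Ioo (0:ℝ) 1) : 0 < du x := by
  have hq := (Q_pos x)
  have h1 : 0 < 1 - x := by linarith [hx.2]
  have h0 := hx.1
  rw [du]; positivity

lemma uu_mono : StrictMonoOn uu (Icc 0 1) := by
  refine strictMonoOn_of_deriv_pos (convex_Icc 0 1) (fun x _ => (uu_deriv x).continuousAt.continuousWithinAt) ?_
  intro x hx
  rw [interior_Icc] at hx
  rw [(uu_deriv x).deriv]; exact du_pos hx

lemma uu_image : uu '' Ioo 0 1 = Ioo 0 1 := by
  apply Subset.antisymm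
  · rintro _ ⟨x, hx, rfl⟩; exact uu_mem hx
  · have := intermediate_value_Ioo (f := uu) (zero_le_one (α := ℝ)) (fun x _ => (uu_deriv x).continuousAt.continuousWithinAt)
    convert! this using 2 <;> norm_num [uu]

noncomputable def ph (u : ℝ) : ℝ := u ^ ((3/4 : ℝ) - 1) * (1 - u) ^ ((3/4 : ℝ) - 1)

lemma ph_int : ∫ x in Ioo (0:ℝ) 1, du x * ph (uu x) = beta (3/4) (3/4) := by
  rw [← beta_int (by norm_num) (by norm_num)]
  have h := integral_image_eq_integral_abs_deriv_smul (measurableSet_Ioo (a := (0:ℝ)) (b := 1))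
    (fun x _ => (uu_deriv x).hasDerivWithinAt) (uu_mono.injOn.mono Ioo_subset_Icc_self) ph
  rw [uu_image] at h
  change _ = ∫ x in Ioo (0:ℝ) 1, ph x
  rw [h]
  refine setIntegral_congr_fun measurableSet_Ioo fun x hx => ?_
  simp [abs_of_pos (du_pos hx)]

lemma ph_integrable : IntegrableOn (fun x => du x * ph (uu x)) (Ioo 0 1) := by
  have h := integrableOn_image_iff_integrableOn_abs_deriv_smul (measurableSet_Ioo (a := (0:ℝ)) (b := 1))
    (fun x _ => (uu_deriv x).hasDerivWithinAt) (uu_mono.injOn.mono Ioo_subset_Icc_self) ph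
  rw [uu_image] at h
  refine (h.1 (beta_integrable (by norm_num) (by norm_num))).congr_fun (fun x hx => ?_) measurableSet_Ioo
  simp [abs_of_pos (du_pos hx)]

lemma om_eq {x : ℝ} (hx : x ∈ Ioo (0:ℝ) 1) :
    om x = 12 * (uu x ^ (-5/4 : ℝ) * (1 - uu x) ^ (-1/4 : ℝ) * du x) := by
  have hq := (Q_pos x)
  have h1 : 0 < 1 - x := by linarith [hx.2]
  have h0 := hx.1
  have hu := (uu_mem hx).1
  have hu1 : 0 < 1 - uu x := by linarith [(uu_mem hx).2]
  have hd := du_pos hx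
  have key : ∀ y : ℝ, 0 < y → (y^(-5/4:ℝ))^4 = (y^5)⁻¹ ∧ (y^(-1/4:ℝ))^4 = y⁻¹ ∧ (y^(1/2:ℝ))^4 = y^2 := by
    intro y hy
    refine ⟨?_, ?_, ?_⟩
    · rw [← Real.rpow_natCast, ← Real.rpow_mul hy.le, ← Real.rpow_natCast, ← Real.rpow_neg hy.le]; norm_num
    · rw [← Real.rpow_natCast, ← Real.rpow_mul hy.le, ← Real.rpow_neg_one]; norm_num
    · rw [← Real.rpow_natCast, ← Real.rpow_mul hy.le, ← Real.rpow_natCast]; norm_num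
  refine (pow_left_inj₀ ?_ ?_ (four_ne_zero)).1 ?_
  · unfold om w0; positivity
  · positivity
  · unfold om w0
    simp only [mul_pow]
    rw [(key x h0).1, (key _ h1).2.2, (key (1+x^2/4) (by positivity)).2.1, (key _ hu).1, (key _ hu1).2.1,
      one_sub_uu, uu, du]
    have : 4 + x^2 ≠ 0 := by positivity
    clear hu hu1 hd key
    generalize hQ : x^2 - x + 2 = Q at hq ⊢
    field_simp
    ring

noncomputable def VV (x : ℝ) : ℝ :=
  uu x ^ (-1/4 : ℝ) * (1 - uu x) ^ (3/4 : ℝ) - x ^ (-1/4 : ℝ) * (1 - x) ^ (3/2 : ℝ)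

lemma prod_deriv {a b y : ℝ} (hy : 0 < y) (hy1 : 0 < 1 - y) :
    HasDerivAt (fun y : ℝ => y ^ a * (1 - y) ^ b)
      (y ^ (a-1) * (1 - y) ^ (b-1) * (a * (1 - y) - b * y)) y := by
  have h1 : HasDerivAt (fun y : ℝ => y ^ a) (a * y ^ (a-1)) y :=
    Real.hasDerivAt_rpow_const (Or.inl hy.ne')
  have h2 : HasDerivAt (fun y : ℝ => (1 - y) ^ b) (-1 * b * (1 - y) ^ (b-1)) y :=
    ((hasDerivAt_id y).const_sub 1).rpow_const (Or.inl hy1.ne')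
  have e1 : y ^ a = y ^ (a-1) * y := by
    nth_rw 3 [← Real.rpow_one y]; rw [← Real.rpow_add hy]; congr 1; ring
  have e2 : (1-y) ^ b = (1-y) ^ (b-1) * (1-y) := by
    nth_rw 3 [← Real.rpow_one (1-y)]; rw [← Real.rpow_add hy1]; congr 1; ring
  convert! h1.mul h2 using 1
  rw [e1, e2]; ring

noncomputable def dV (x : ℝ) : ℝ :=
  -(1/48) * (om x - w0 x) - (1/2) * (du x * ph (uu x)) +
    (7/8) * (x ^ ((3/4 : ℝ) - 1) * (1 - x) ^ ((3/2 : ℝ) - 1))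

lemma VV_deriv {x : ℝ} (hx : x ∈ Ioo (0:ℝ) 1) : HasDerivAt VV (dV x) x := by
  have h1 : 0 < 1 - x := by linarith [hx.2]
  have h0 := hx.1
  have hu := (uu_mem hx).1
  have hu1 : 0 < 1 - uu x := by linarith [(uu_mem hx).2]
  have A := (prod_deriv (a := -1/4) (b := 3/4) hu hu1).comp x (uu_deriv x)
  have B := prod_deriv (a := -1/4) (b := 3/2) h0 h1
  convert! A.sub B using 1
  rw [dV, om_eq hx, w0, ph]
  have e : ∀ y : ℝ, 0 < y → y ^ ((3/4 : ℝ) - 1) = y ^ (-5/4 : ℝ) * y := by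
    intro y hy
    nth_rw 3 [← Real.rpow_one y]; rw [← Real.rpow_add hy]; norm_num
  rw [e x h0, e _ hu]
  norm_num
  ring

lemma VV_one : Tendsto VV (𝓝[<] 1) (𝓝 0) := by
  have hu1 : uu 1 = 1 := by norm_num [uu]
  have h : ContinuousAt VV 1 := by
    have hu := (uu_deriv 1).continuousAt
    unfold VV
    refine ContinuousAt.sub (ContinuousAt.mul ?_ ?_) (ContinuousAt.mul ?_ ?_)
    · exact hu.rpow_const (Or.inl (by rw [hu1]; norm_num))
    · exact (continuousAt_const.sub hu).rpow_const (Or.inr (by norm_num))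
    · exact continuousAt_id.rpow_const (Or.inl (by norm_num))
    · exact (continuousAt_const.sub continuousAt_id).rpow_const (Or.inr (by norm_num))
  have h2 := h.tendsto.mono_left (nhdsWithin_le_nhds (s := Iio 1))
  have h3 : VV 1 = 0 := by
    simp only [VV, hu1, sub_self]
    rw [Real.zero_rpow (by norm_num), Real.zero_rpow (by norm_num)]; simp
  rwa [h3] at h2

noncomputable def nn (x : ℝ) : ℝ :=
  (4 / (x^2 - x + 2)^2) ^ (-1/4 : ℝ) * (1 - uu x) ^ (3/4 : ℝ) - (1 - x) ^ (3/2 : ℝ)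

lemma nn_diff : DifferentiableAt ℝ nn 0 := by
  have hu := (uu_deriv 0).differentiableAt
  have hu0 : uu 0 = 0 := by norm_num [uu]
  unfold nn
  refine DifferentiableAt.sub (DifferentiableAt.mul ?_ ?_) ?_
  · refine DifferentiableAt.rpow_const ?_ (Or.inl (by norm_num))
    refine DifferentiableAt.div (by fun_prop) (by fun_prop) (by norm_num)
  · refine DifferentiableAt.rpow_const (by fun_prop) (Or.inl (by rw [hu0]; norm_num))
  · exact DifferentiableAt.rpow_const (by fun_prop) (Or.inl (by norm_num))

lemma VV_zero : Tendsto VV (𝓝[>] 0) (𝓝 0) := by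
  have h := nn_diff.hasDerivAt.tendsto_slope.mono_left
    (nhdsWithin_mono 0 (show Ioi (0:ℝ) ⊆ {0}ᶜ from fun x hx => ne_of_gt hx))
  have hp : Tendsto (fun x : ℝ => x ^ (3/4 : ℝ)) (𝓝[>] 0) (𝓝 0) := by
    have := (Real.continuousAt_rpow_const 0 (3/4) (Or.inr (by norm_num))).tendsto.mono_left
      (nhdsWithin_le_nhds (s := Ioi 0))
    rwa [Real.zero_rpow (by norm_num)] at this
  have hm := hp.mul h
  rw [zero_mul] at hm
  refine hm.congr' ?_
  filter_upwards [self_mem_nhdsWithin] with x (hx : 0 < x)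
  have hn : nn 0 = 0 := by norm_num [nn, uu]
  have e1 : x ^ (3/4 : ℝ) = x ^ (-1/4 : ℝ) * x := by
    nth_rw 3 [← Real.rpow_one x]; rw [← Real.rpow_add hx]; norm_num
  have e2 : uu x ^ (-1/4 : ℝ) = x ^ (-1/4 : ℝ) * (4 / (x^2 - x + 2)^2) ^ (-1/4 : ℝ) := by
    rw [← Real.mul_rpow hx.le (by positivity)]; congr 1; rw [uu]; ring
  rw [slope_def_field, hn, e1, VV, e2, nn, sub_zero, sub_zero, mul_assoc, mul_div_cancel₀ _ hx.ne']
  ring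

lemma main_int : ∫ x in Ioo (0:ℝ) 1, (om x - w0 x) =
    -24 * beta (3/4) (3/4) + 42 * beta (3/4) (3/2) := by
  have hb := beta_integrable (a := 3/4) (b := 3/2) (by norm_num) (by norm_num)
  have i1 := diff_integrable.const_mul (-(1/48))
  have i2 := ph_integrable.const_mul (1/2)
  have i3 := hb.const_mul (7/8)
  have hi : IntegrableOn dV (Ioo 0 1) := (i1.sub i2).add i3
  have h := intervalIntegral.integral_eq_sub_of_hasDerivAt_of_tendsto (zero_lt_one (α := ℝ))
    (fun x hx => VV_deriv hx) ((intervalIntegrable_iff_integrableOn_Ioo_of_le zero_le_one).2 hi)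
    VV_zero VV_one
  rw [intervalIntegral.integral_of_le zero_le_one, integral_Ioc_eq_integral_Ioo] at h
  unfold dV at h
  rw [integral_add (by exact i1.sub i2) i3, integral_sub i1 i2, integral_const_mul, integral_const_mul,
    integral_const_mul, ph_int, beta_int (by norm_num) (by norm_num)] at h
  linarith

lemma beta_rf (k : ℕ) : beta (2 * (k : ℝ) - 1/4) (5/2) * (risingFactorial (9/8) k * risingFactorial (13/8) k) =
    -6 * beta (3/4) (3/2) * (risingFactorial (-1/8) k * risingFactorial (3/8) k) := by
  have g4 : Real.Gamma (5/2) = 3/2 * Real.Gamma (3/2) := by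
    rw [← Real.Gamma_add_one (by positivity)]; congr 1; norm_num
  induction k with
  | zero =>
    have g1 : Real.Gamma (3/4) = (-1/4) * Real.Gamma (-1/4) := by
      rw [← Real.Gamma_add_one (by norm_num)]; congr 1; norm_num
    simp only [risingFactorial, beta, Finset.prod_range_zero]
    norm_num at g1 g4 ⊢
    rw [g1, g4]; ring
  | succ n ih =>
    rw [rf_succ, rf_succ, rf_succ, rf_succ]
    have hn : (0:ℝ) ≤ n := Nat.cast_nonneg n
    set s : ℝ := 2 * (n:ℝ) - 1/4 with hs
    have s0 : s ≠ 0 := by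
      intro h
      have h8 : ((8 * n : ℕ) : ℝ) = ((1 : ℕ) : ℝ) := by push_cast; linarith
      have := Nat.cast_injective h8
      omega
    have s1 : 0 < s + 1 := by linarith
    have e : 2 * ((n+1 : ℕ) : ℝ) - 1/4 = s + 1 + 1 := by rw [hs]; push_cast; ring
    have a1 : Real.Gamma (s+1+1) = (s+1) * (s * Real.Gamma s) := by
      rw [Real.Gamma_add_one s1.ne', Real.Gamma_add_one s0]
    have a2 : Real.Gamma (s+1+1+5/2) = (s+5/2+1) * ((s+5/2) * Real.Gamma (s+5/2)) := by
      rw [← Real.Gamma_add_one (by linarith), ← Real.Gamma_add_one (by linarith)]; congr 1; ring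
    have key : beta (s+1+1) (5/2) * ((s+5/2+1) * (s+5/2)) = beta s (5/2) * ((s+1) * s) := by
      unfold beta
      rw [a1, a2]
      have p1 : s + 5/2 + 1 ≠ 0 := by linarith
      have p2 : s + 5/2 ≠ 0 := by linarith
      have p3 : Real.Gamma (s+5/2) ≠ 0 := (Real.Gamma_pos_of_pos (by linarith)).ne'
      generalize Real.Gamma (s+5/2) = G at p3 ⊢
      generalize s + 5/2 + 1 = c at p1 ⊢
      generalize s + 5/2 = d at p2 ⊢
      field_simp
    rw [e]
    have f1 : (9/8 + (n:ℝ)) * (13/8 + n) = (s+5/2+1) * (s+5/2) / 4 := by rw [hs]; ring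
    have f2 : (-1/8 + (n:ℝ)) * (3/8 + n) = (s+1) * s / 4 := by rw [hs]; ring
    linear_combination (beta (s+1+1) (5/2) * risingFactorial (9/8) n * risingFactorial (13/8) n) * f1
      + (risingFactorial (9/8) n * risingFactorial (13/8) n / 4) * key + ((s+1)*s/4) * ih
      + 6 * beta (3/4) (3/2) * risingFactorial (-1/8) n * risingFactorial (3/8) n * f2

lemma beta_ratio : 4 * beta (3/4) (3/4) = 5 * Real.sqrt 2 * beta (3/4) (3/2) := by
  have g1 : Real.Gamma (3/2) = 1/2 * Real.sqrt Real.pi := by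
    rw [← Real.Gamma_one_half_eq, ← Real.Gamma_add_one (by norm_num)]; norm_num
  have g2 : Real.Gamma (9/4) = 5/16 * Real.Gamma (1/4) := by
    have a : Real.Gamma (5/4) = 1/4 * Real.Gamma (1/4) := by
      rw [← Real.Gamma_add_one (by norm_num)]; norm_num
    have b : Real.Gamma (9/4) = 5/4 * Real.Gamma (5/4) := by
      rw [← Real.Gamma_add_one (by norm_num)]; norm_num
    rw [b, a]; ring
  have g3 : Real.Gamma (1/4) * Real.Gamma (3/4) = Real.pi * Real.sqrt 2 := by
    have h := Real.Gamma_mul_Gamma_one_sub (1/4)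
    rw [show (1:ℝ) - 1/4 = 3/4 by norm_num, show Real.pi * (1/4) = Real.pi / 4 by ring,
      Real.sin_pi_div_four] at h
    rw [h]
    have : Real.sqrt 2 ≠ 0 := by positivity
    field_simp
    norm_num
  have p1 : Real.Gamma (1/4) ≠ 0 := (Real.Gamma_pos_of_pos (by norm_num)).ne'
  have p2 : Real.sqrt Real.pi ≠ 0 := (Real.sqrt_pos.2 Real.pi_pos).ne'
  have p3 : Real.sqrt Real.pi ^ 2 = Real.pi := Real.sq_sqrt Real.pi_pos.le
  unfold beta
  rw [show (3/4:ℝ)+3/4 = 3/2 by norm_num, show (3/4:ℝ)+3/2 = 9/4 by norm_num, g1, g2]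
  field_simp
  rw [p3]
  linear_combination 16 * g3

theorem stmt_5 :
    5 * Real.sqrt 2 =
      ∑' k : ℕ, (-1/4 : ℝ) ^ k * (risingFactorial (-1/8) k * risingFactorial (1/4) k * risingFactorial (3/8) k) /
        (risingFactorial (1) k * risingFactorial (9/8) k * risingFactorial (13/8) k) * (40 * (k:ℝ) + 7) := by
  have hB : 0 < beta (3/4) (3/2) := beta_pos (by norm_num) (by norm_num)
  have h := series_int
  simp only [term_int] at h
  rw [main_int] at h
  have h' := (hasSum_nat_add_iff (f := fun k : ℕ => -6 * beta (3/4) (3/2) *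
      ((-1/4 : ℝ) ^ k * (risingFactorial (-1/8) k * risingFactorial (1/4) k * risingFactorial (3/8) k) /
        (risingFactorial (1) k * risingFactorial (9/8) k * risingFactorial (13/8) k) * (40 * (k:ℝ) + 7))) 1).1
    (by
      convert! h using 1
      ext k
      have hb := beta_rf (k+1)
      have p1 := (rf_pos one_pos (k+1)).ne'
      have p2 := (rf_pos (show (0:ℝ) < 9/8 by norm_num) (k+1)).ne'
      have p3 := (rf_pos (show (0:ℝ) < 13/8 by norm_num) (k+1)).ne'
      rw [ak]
      generalize beta (2 * ((k+1 : ℕ) : ℝ) - 1/4) (5/2) = b at hb ⊢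
      rw [← eq_div_iff (mul_ne_zero p2 p3)] at hb
      rw [hb]
      ring)
  have h2 := h'.mul_left (-6 * beta (3/4) (3/2))⁻¹
  refine (HasSum.tsum_eq ?_).symm
  convert! h2 using 1
  · ext k; field_simp
  · simp [risingFactorial]
    field_simp
    linear_combination (-6) * beta_ratio
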